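/- arXiv:2405.08412 — 6 statements merged into one kernel-verified Lean document; each statement's English description precedes it below -/
import Mathlib

section
/- Let X and Y be reflexive Banach spaces, Z a normed vector space, and T : X × Y → Z a continuous bilinear operator. Suppose that for every pair of sequences {x_n} ⊂ X and {y_n} ⊂ Y such that {x_n} converges weakly in X and {y_n} converges weakly in Y, the sequence {T(x_n, y_n)} converges strongly in Z. Then T is compact. -/
open Filter Topology Metric NormedSpace

/-- A sequence converges weakly to a point in a normed space. -/
def WeaklyConvergesTo {𝕜 X : Type*} [NontriviallyNormedField 𝕜] [NormedAddCommGroup X]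
    [NormedSpace 𝕜 X] (x : ℕ → X) (x₀ : X) : Prop :=
  ∀ f : X →L[𝕜] 𝕜, Tendsto (fun n => f (x n)) atTop (𝓝 (f x₀))

/-- A bilinear operator is compact if the closure of the image of the product of the
closed unit balls is compact. -/
def IsCompactBilinear {X Y Z : Type*} [NormedAddCommGroup X] [NormedSpace ℝ X]
    [NormedAddCommGroup Y] [NormedSpace ℝ Y] [NormedAddCommGroup Z] [NormedSpace ℝ Z]
    (T : X →L[ℝ] Y →L[ℝ] Z) : Prop :=
  IsCompact (closure (Set.image2 (fun x y => T x y)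
    (closedBall (0 : X) 1) (closedBall (0 : Y) 1)))

/-- Banach-Alaoglu in a reflexive space, ultrafilter form. -/
theorem aux_ultra {X : Type*} [NormedAddCommGroup X] [NormedSpace ℝ X]
    (hX : Function.Surjective (inclusionInDoubleDual ℝ X))
    (x : ℕ → X) (hx : ∀ n, ‖x n‖ ≤ 1) (U : Ultrafilter ℕ) :
    ∃ a : X, ∀ f : X →L[ℝ] ℝ, Tendsto (fun n => f (x n)) U (𝓝 (f a)) := by
  have hc := WeakDual.isCompact_closedBall (𝕜 := ℝ) (E := StrongDual ℝ X) 0 1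
  let j : ℕ → WeakDual ℝ (StrongDual ℝ X) :=
    fun n => StrongDual.toWeakDual (inclusionInDoubleDual ℝ X (x n))
  have hj : ∀ n, j n ∈ WeakDual.toStrongDual ⁻¹' closedBall (0 : StrongDual ℝ (StrongDual ℝ X)) 1 := by
    intro n
    refine (mem_closedBall_zero_iff (E := StrongDual ℝ (StrongDual ℝ X))).2 ?_
    exact (double_dual_bound ℝ X (x n)).trans (hx n)
  obtain ⟨φ, -, hφ⟩ := hc.ultrafilter_le_nhds (U.map j)
    (by
      rw [le_principal_iff]
      exact Filter.mem_map.2 (Filter.univ_mem' hj))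
  obtain ⟨a, ha⟩ := hX (WeakDual.toStrongDual φ)
  refine ⟨a, fun f => ?_⟩
  have h1 : Tendsto j U (𝓝 φ) := hφ
  have h2 := ((WeakDual.eval_continuous f).tendsto φ).comp h1
  have h3 : φ f = f a := by
    have := congrArg (fun ψ : StrongDual ℝ (StrongDual ℝ X) => ψ f) ha
    exact this.symm
  rw [← h3]
  exact h2

/-- Sequential weak compactness of the unit ball of a reflexive space. -/
theorem aux_subseq {X : Type*} [NormedAddCommGroup X] [NormedSpace ℝ X]
    (hX : Function.Surjective (inclusionInDoubleDual ℝ X))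
    (x : ℕ → X) (hx : ∀ n, ‖x n‖ ≤ 1) :
    ∃ (a : X) (φ : ℕ → ℕ), StrictMono φ ∧ WeaklyConvergesTo (𝕜 := ℝ) (x ∘ φ) a := by
  let M : Submodule ℝ X := (Submodule.span ℝ (Set.range x)).topologicalClosure
  have hMc : IsClosed (M : Set X) := Submodule.isClosed_topologicalClosure _
  have hxM : ∀ n, x n ∈ M := fun n =>
    Submodule.le_topologicalClosure _ (Submodule.subset_span ⟨n, rfl⟩)
  have hsep : TopologicalSpace.IsSeparable (M : Set X) :=
    ((Set.countable_range x).isSeparable.span (R := ℝ)).closure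
  obtain ⟨c, hc, hMc'⟩ := hsep
  have : Countable c := hc.to_subtype
  choose g hg1 hg2 using fun k : c => exists_dual_vector'' ℝ (k : X)
  have hK : IsCompact (Set.univ.pi fun _ : c => Set.Icc (-1 : ℝ) 1) :=
    isCompact_univ_pi fun _ => isCompact_Icc
  obtain ⟨L, -, φ, hφ, hL⟩ := hK.tendsto_subseq (x := fun n (k : c) => g k (x n)) (by
    intro n k _
    have h1 : ‖g k (x n)‖ ≤ 1 * 1 := (g k).le_of_opNorm_le_of_le (hg1 k) (hx n)
    rw [one_mul, Real.norm_eq_abs, abs_le] at h1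
    exact h1)
  rw [tendsto_pi_nhds] at hL
  have key : ∀ U : Ultrafilter ℕ, (U : Filter ℕ) ≤ atTop → ∃ a ∈ M, (∀ k, g k a = L k) ∧
      ∀ f : X →L[ℝ] ℝ, Tendsto (fun n => f (x (φ n))) U (𝓝 (f a)) := by
    intro U hU
    obtain ⟨a, ha⟩ := aux_ultra hX (x ∘ φ) (fun n => hx _) U
    refine ⟨a, ?_, fun k => tendsto_nhds_unique (ha (g k)) ((hL k).mono_left hU), ha⟩
    by_contra hn
    obtain ⟨f, u, hu1, hu2⟩ := geometric_hahn_banach_point_closed M.convex hMc hn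
    have := ge_of_tendsto' (ha f) (fun n => (hu2 _ (hxM (φ n))).le)
    linarith
  have uniq : ∀ m ∈ M, (∀ k, g k m = 0) → m = 0 := by
    intro m hm hk
    rw [← norm_le_zero_iff]
    refine le_of_forall_pos_le_add fun ε hε => ?_
    obtain ⟨d, hd, hdm⟩ := Metric.mem_closure_iff.1 (hMc' hm) (ε / 2) (half_pos hε)
    have h1 := hg2 ⟨d, hd⟩
    have h2 : ‖g ⟨d, hd⟩ (d - m)‖ ≤ 1 * ‖d - m‖ := (g ⟨d, hd⟩).le_of_opNorm_le (hg1 _) _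
    rw [map_sub, hk, sub_zero, h1] at h2
    simp at h2
    rw [dist_comm, dist_eq_norm] at hdm
    have h3 := norm_sub_norm_le m d
    rw [norm_sub_rev] at h3
    linarith
  obtain ⟨a, haM, hak, -⟩ := key (Ultrafilter.of atTop) (Ultrafilter.of_le _)
  refine ⟨a, φ, hφ, fun f => ?_⟩
  rw [tendsto_iff_ultrafilter]
  intro U hU
  obtain ⟨b, hbM, hbk, hb⟩ := key U hU
  have : b - a = 0 := uniq _ (M.sub_mem hbM haM) fun k => by rw [map_sub, hak, hbk, sub_self]
  rw [← sub_eq_zero.1 this]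
  exact hb f

/-- Proposition 2.3 (i): if `X` and `Y` are reflexive Banach spaces and a continuous bilinear
operator `T : X × Y → Z` maps pairs of weakly convergent sequences to strongly convergent
sequences, then `T` is compact. -/
theorem compact_of_weak_to_strong
    {X Y Z : Type*} [NormedAddCommGroup X] [NormedSpace ℝ X] [CompleteSpace X]
    [NormedAddCommGroup Y] [NormedSpace ℝ Y] [CompleteSpace Y]
    [NormedAddCommGroup Z] [NormedSpace ℝ Z]
    (hX : Function.Surjective (inclusionInDoubleDual ℝ X))
    (hY : Function.Surjective (inclusionInDoubleDual ℝ Y))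
    (T : X →L[ℝ] Y →L[ℝ] Z)
    (h : ∀ (x : ℕ → X) (y : ℕ → Y) (x₀ : X) (y₀ : Y),
      WeaklyConvergesTo (𝕜 := ℝ) x x₀ → WeaklyConvergesTo (𝕜 := ℝ) y y₀ →
      ∃ z : Z, Tendsto (fun n => T (x n) (y n)) atTop (𝓝 z)) :
    IsCompactBilinear T := by
  unfold IsCompactBilinear
  rw [isCompact_iff_isSeqCompact]
  intro z hz
  have hd : ∀ n : ℕ, ∃ p : X × Y, ‖p.1‖ ≤ 1 ∧ ‖p.2‖ ≤ 1 ∧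
      dist (z n) (T p.1 p.2) < 1 / ((n : ℝ) + 1) := by
    intro n
    obtain ⟨w, ⟨a, ha, b, hb, rfl⟩, hw⟩ :=
      Metric.mem_closure_iff.1 (hz n) (1 / ((n : ℝ) + 1)) Nat.one_div_pos_of_nat
    exact ⟨(a, b), by simpa using ha, by simpa using hb, hw⟩
  choose p hp1 hp2 hp3 using hd
  obtain ⟨a, φ, hφ, ha⟩ := aux_subseq hX (fun n => (p n).1) hp1
  obtain ⟨b, ψ, hψ, hb⟩ := aux_subseq hY (fun n => (p (φ n)).2) (fun n => hp2 _)
  obtain ⟨w, hw⟩ := h (fun n => (p (φ (ψ n))).1) (fun n => (p (φ (ψ n))).2) a b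
    (fun f => (ha f).comp hψ.tendsto_atTop) hb
  have hlim : Tendsto (z ∘ (φ ∘ ψ)) atTop (𝓝 w) := by
    refine (tendsto_iff_of_dist ?_).2 hw
    have h0 := (tendsto_one_div_add_atTop_nhds_zero_nat (𝕜 := ℝ)).comp (hφ.comp hψ).tendsto_atTop
    exact squeeze_zero (fun _ => dist_nonneg) (fun n => (hp3 (φ (ψ n))).le) h0
  exact ⟨w, isClosed_closure.mem_of_tendsto hlim (Eventually.of_forall fun n => hz _),
    φ ∘ ψ, hφ.comp hψ, hlim⟩
end

section
/- Let X and Y be reflexive Banach spaces, Z a normed vector space, and T : X × Y → Z a continuous bilinear operator. Suppose that for every pair of sequences {x_n} ⊂ X and {y_n} ⊂ Y such that {x_n} converges weakly in X, {y_n} converges weakly in Y, and at least one of {x_n} or {y_n} converges weakly to 0, the sequence {T(x_n, y_n)} converges strongly to 0 in Z. Then T is compact. -/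
open Filter Topology Metric NormedSpace

/-- Bounded sequences in a reflexive space have weakly convergent subsequences. -/
theorem weak_subseq_of_reflexive {X : Type*} [NormedAddCommGroup X] [NormedSpace ℝ X]
    (hX : Function.Surjective (inclusionInDoubleDual ℝ X)) (x : ℕ → X)
    (hx : ∀ n, x n ∈ closedBall (0 : X) 1) :
    ∃ x₀ ∈ closedBall (0 : X) 1, ∃ φ : ℕ → ℕ, StrictMono φ ∧
      WeaklyConvergesTo (𝕜 := ℝ) (x ∘ φ) x₀ := by
  set M : Submodule ℝ X := (Submodule.span ℝ (Set.range x)).topologicalClosure with hM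
  have hMc : IsClosed (M : Set X) := Submodule.isClosed_topologicalClosure _
  have hxM : ∀ n, x n ∈ M := fun n =>
    Submodule.le_topologicalClosure _ (Submodule.subset_span ⟨n, rfl⟩)
  have hsep : TopologicalSpace.IsSeparable (M : Set X) := by
    rw [hM, Submodule.topologicalClosure_coe]
    exact ((Set.countable_range x).isSeparable.span (R := ℝ)).closure
  have : TopologicalSpace.SeparableSpace M := hsep.separableSpace
  let d : ℕ → M := TopologicalSpace.denseSeq M
  have hd : DenseRange d := TopologicalSpace.denseRange_denseSeq M
  choose g hg1 hg2 using fun k => exists_dual_vector'' ℝ (d k : X)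

  have hsepM : ∀ m ∈ M, (∀ k, g k m = 0) → m = 0 := by
    intro m hm hk
    rw [← norm_le_zero_iff]
    refine le_of_forall_pos_le_add fun ε hε => ?_
    obtain ⟨k, hkd⟩ := hd.exists_dist_lt (⟨m, hm⟩ : M) (half_pos hε)
    have h1 : ‖m - d k‖ < ε / 2 := by
      have : dist (m : X) (d k : X) < ε / 2 := hkd
      rwa [dist_eq_norm] at this
    have h2 : ‖(d k : X)‖ ≤ ‖m - d k‖ := by
      have h3 : g k (m - d k) = -‖(d k : X)‖ := by
        rw [map_sub, hk k, hg2 k]; simp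
      have h4 := (g k).le_of_opNorm_le (hg1 k) (m - d k)
      rw [h3] at h4
      simpa using h4
    have h5 : ‖m‖ ≤ ‖m - d k‖ + ‖(d k : X)‖ := by
      simpa using norm_add_le (m - d k) (d k : X)
    linarith
  have hann : ∀ z : X, (∀ f : StrongDual ℝ X, (∀ m ∈ M, f m = 0) → f z = 0) → z ∈ M := by
    intro z hz
    by_contra hzM
    obtain ⟨f, u, hfu, hfM⟩ := geometric_hahn_banach_point_closed M.convex hMc hzM
    have hu : u < 0 := by simpa using hfM 0 M.zero_mem
    have h0 : f z = 0 := hz f fun m hm => by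
      by_contra hne
      have := hfM ((u / f m) • m) (M.smul_mem _ hm)
      rw [map_smul, smul_eq_mul, div_mul_cancel₀ _ hne] at this
      exact lt_irrefl _ this
    linarith
  let K : Set (WeakDual ℝ (StrongDual ℝ X)) :=
    (WeakDual.toStrongDual ⁻¹' closedBall 0 1) ∩
      {Φ | ∀ f : StrongDual ℝ X, (∀ m ∈ M, f m = 0) → Φ f = 0}
  have hK : IsCompact K := by
    refine (WeakDual.isCompact_closedBall (0 : StrongDual ℝ (StrongDual ℝ X)) 1).inter_right ?_
    simp only [Set.ofPred_forall]
    exact isClosed_iInter fun f => isClosed_iInter fun _ =>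
      isClosed_eq (WeakDual.eval_continuous f) continuous_const
  have hrep : ∀ Φ ∈ K, ∃ z ∈ M, z ∈ closedBall (0 : X) 1 ∧ ∀ f : StrongDual ℝ X, Φ f = f z := by
    intro Φ hΦ
    obtain ⟨z, hz⟩ := hX (WeakDual.toStrongDual Φ)
    have hz' : ∀ f : StrongDual ℝ X, Φ f = f z := fun f => by
      rw [← dual_def ℝ X z f, hz]; rfl
    refine ⟨z, hann z fun f hf => ?_, ?_, hz'⟩
    · rw [← hz' f]; exact hΦ.2 f hf
    · have h1 : WeakDual.toStrongDual Φ ∈ closedBall 0 1 := hΦ.1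
      rw [← hz] at h1
      replace h1 := (mem_closedBall_zero_iff (E := StrongDual ℝ (StrongDual ℝ X))).1 h1
      rw [mem_closedBall_zero_iff, ← (inclusionInDoubleDualLi (E := X) ℝ).norm_map z]
      exact h1
  have hJ : ∀ n, StrongDual.toWeakDual (inclusionInDoubleDual ℝ X (x n)) ∈ K := fun n => by
    refine ⟨?_, fun f hf => hf _ (hxM n)⟩
    change inclusionInDoubleDual ℝ X (x n) ∈ closedBall 0 1
    exact (mem_closedBall_zero_iff (E := StrongDual ℝ (StrongDual ℝ X))).2
      ((double_dual_bound ℝ X (x n)).trans (mem_closedBall_zero_iff.1 (hx n)))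
  have : CompactSpace K := isCompact_iff_compactSpace.1 hK
  let F : K → (ℕ → ℝ) := fun Φ k => Φ.1 (g k)
  have hFc : Continuous F := continuous_pi fun k =>
    (WeakDual.eval_continuous (g k)).comp continuous_subtype_val
  have hFi : Function.Injective F := by
    rintro ⟨Φ, hΦ⟩ ⟨Ψ, hΨ⟩ hEq
    obtain ⟨z, hzM, -, hz⟩ := hrep Φ hΦ
    obtain ⟨w, hwM, -, hw⟩ := hrep Ψ hΨ
    have h1 : z - w = 0 := hsepM _ (M.sub_mem hzM hwM) fun k => by
      have h2 : Φ (g k) = Ψ (g k) := congrFun hEq k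
      rw [map_sub, ← hz, ← hw, h2, sub_self]
    have h2 : z = w := sub_eq_zero.1 h1
    apply Subtype.ext
    apply DFunLike.ext
    intro f
    change Φ f = Ψ f
    rw [hz, hw, h2]
  have hF := hFc.isClosedEmbedding hFi
  let s : ℕ → K := fun n => ⟨_, hJ n⟩
  obtain ⟨a, ⟨Φ, rfl⟩, φ, hφ, hlim⟩ :=
    (isCompact_range hFc).tendsto_subseq (x := fun n => F (s n)) fun n => ⟨s n, rfl⟩
  have hlim' : Tendsto (s ∘ φ) atTop (𝓝 Φ) := hF.isEmbedding.tendsto_nhds_iff.2 hlim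
  obtain ⟨z, -, hzb, hz⟩ := hrep Φ.1 Φ.2
  refine ⟨z, hzb, φ, hφ, fun f => ?_⟩
  have h1 := (((WeakDual.eval_continuous f).comp continuous_subtype_val).tendsto Φ).comp hlim'
  have h2 : f z = Φ.1 f := (hz f).symm
  rw [h2]
  exact h1

/-- Remark 2.4: to conclude compactness of the continuous bilinear operator `T` on reflexive
Banach spaces, it suffices to test on pairs of weakly convergent sequences at least one of
which converges weakly to `0`, and conclude strong convergence to `0` of the images. -/
theorem compact_of_weak_null_to_strong_null
    {X Y Z : Type*} [NormedAddCommGroup X] [NormedSpace ℝ X] [CompleteSpace X]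
    [NormedAddCommGroup Y] [NormedSpace ℝ Y] [CompleteSpace Y]
    [NormedAddCommGroup Z] [NormedSpace ℝ Z]
    (hX : Function.Surjective (inclusionInDoubleDual ℝ X))
    (hY : Function.Surjective (inclusionInDoubleDual ℝ Y))
    (T : X →L[ℝ] Y →L[ℝ] Z)
    (h : ∀ (x : ℕ → X) (y : ℕ → Y) (x₀ : X) (y₀ : Y),
      WeaklyConvergesTo (𝕜 := ℝ) x x₀ → WeaklyConvergesTo (𝕜 := ℝ) y y₀ →
      (x₀ = 0 ∨ y₀ = 0) →
      Tendsto (fun n => T (x n) (y n)) atTop (𝓝 (0 : Z))) :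
    IsCompactBilinear T := by
  have key : IsSeqCompact (Set.image2 (fun x y => T x y)
      (closedBall (0 : X) 1) (closedBall (0 : Y) 1)) := by
    intro z hz
    choose x hx y hy hxy using hz
    obtain ⟨x₀, hx₀, φ, hφ, hxc⟩ := weak_subseq_of_reflexive hX x hx
    obtain ⟨y₀, hy₀, ψ, hψ, hyc⟩ := weak_subseq_of_reflexive hY (y ∘ φ) fun n => hy _
    refine ⟨T x₀ y₀, ⟨x₀, hx₀, y₀, hy₀, rfl⟩, φ ∘ ψ, hφ.comp hψ, ?_⟩
    have hxc' : WeaklyConvergesTo (𝕜 := ℝ) (fun n => x (φ (ψ n))) x₀ := fun f =>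
      (hxc f).comp hψ.tendsto_atTop
    have hyc' : WeaklyConvergesTo (𝕜 := ℝ) (fun n => y (φ (ψ n))) y₀ := hyc
    have h1 := h (fun n => x (φ (ψ n)) - x₀) (fun n => y (φ (ψ n))) 0 y₀
      (fun f => by simpa using (hxc' f).sub_const (f x₀)) hyc' (Or.inl rfl)
    have h2 := h (fun _ => x₀) (fun n => y (φ (ψ n)) - y₀) x₀ 0
      (fun f => tendsto_const_nhds) (fun f => by simpa using (hyc' f).sub_const (f y₀))
      (Or.inr rfl)
    have h3 := (h1.add h2).add_const (T x₀ y₀)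
    rw [add_zero, zero_add] at h3
    refine h3.congr fun n => ?_
    simp only [Function.comp_apply, ← hxy, map_sub, sub_apply]
    abel
  have hc := key.isCompact
  unfold IsCompactBilinear
  rwa [hc.isClosed.closure_eq]
end

section
/- Let X be a finite-dimensional normed space, Y and Z Banach spaces, and T : X × Y → Z a compact continuous bilinear operator. Then the transpose T^{*1} : Z^* × Y → X^*, defined by T^{*1}(z^*, y)(x) = z^*(T(x, y)), is a compact bilinear operator. -/
open Filter Topology Metric

/-- A bilinear map is compact if the closure of the image of the product of the
closed unit balls is compact. -/
def IsCompactBilinearMap {X Y Z : Type*} [NormedAddCommGroup X] [NormedSpace ℝ X]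
    [NormedAddCommGroup Y] [NormedSpace ℝ Y] [NormedAddCommGroup Z] [NormedSpace ℝ Z]
    (f : X → Y → Z) : Prop :=
  IsCompact (closure (Set.image2 f (closedBall (0 : X) 1) (closedBall (0 : Y) 1)))

/-- If `X` is a finite-dimensional normed space, `Y`, `Z` are Banach spaces and
`T : X × Y → Z` is a compact continuous bilinear operator, then the transpose
`T^{*1} : Z^* × Y → X^*`, given by `T^{*1}(z^*, y)(x) = z^*(T(x, y))`, is a compact
bilinear operator. -/
theorem transpose_one_compact_of_finiteDimensional
    {X Y Z : Type*} [NormedAddCommGroup X] [NormedSpace ℝ X] [FiniteDimensional ℝ X]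
    [NormedAddCommGroup Y] [NormedSpace ℝ Y] [CompleteSpace Y]
    [NormedAddCommGroup Z] [NormedSpace ℝ Z] [CompleteSpace Z]
    (T : X →L[ℝ] Y →L[ℝ] Z)
    (hT : IsCompactBilinearMap fun x y => T x y) :
    IsCompactBilinearMap fun (g : Z →L[ℝ] ℝ) (y : Y) => g.comp (T.flip y) := by
  have : ProperSpace (X →L[ℝ] ℝ) := FiniteDimensional.proper ℝ _
  refine (isCompact_closedBall (0 : X →L[ℝ] ℝ) ‖T.flip‖).of_isClosed_subset isClosed_closure
    (closure_minimal ?_ isClosed_closedBall)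
  rintro _ ⟨g, hg, y, hy, rfl⟩
  rw [mem_closedBall_zero_iff] at hg hy ⊢
  calc ‖g.comp (T.flip y)‖ ≤ ‖g‖ * ‖T.flip y‖ := g.opNorm_comp_le _
    _ ≤ 1 * ‖T.flip y‖ := by gcongr
    _ = ‖T.flip y‖ := one_mul _
    _ ≤ ‖T.flip‖ * ‖y‖ := T.flip.le_opNorm y
    _ ≤ ‖T.flip‖ * 1 := by gcongr
    _ = ‖T.flip‖ := mul_one _
end

section
/- Let X, Y, Z be Banach spaces and T : X × Y → Z a continuous bilinear operator such that T is compact and the transpose T^{*1} : Z^* × Y → X^* is compact. If {f_n} converges weakly to f in X and {g_n} converges weakly to g in Y, then T(f_n, g_n) converges strongly to T(f, g) in Z. -/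
open Filter Topology Metric

theorem WeaklyConvergesTo.exists_bound {X : Type*} [NormedAddCommGroup X] [NormedSpace ℝ X]
    {x : ℕ → X} {x₀ : X} (h : WeaklyConvergesTo (𝕜 := ℝ) x x₀) :
    ∃ C : ℝ, 0 < C ∧ ∀ n, ‖x n‖ ≤ C := by
  have := banach_steinhaus (g := fun n => NormedSpace.inclusionInDoubleDual ℝ X (x n)) (by
    intro φ
    obtain ⟨C, hC⟩ := (h φ).norm.bddAbove_range
    exact ⟨C, fun n => hC ⟨n, rfl⟩⟩)
  obtain ⟨C, hC⟩ := this
  refine ⟨max C 1, by positivity, fun n => le_trans ?_ (le_max_left _ _)⟩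
  have := hC n
  rwa [show ‖NormedSpace.inclusionInDoubleDual ℝ X (x n)‖ = ‖x n‖ from
    (NormedSpace.inclusionInDoubleDualLi ℝ (E := X)).norm_map (x n)] at this

theorem tendsto_compact_pairing {X : Type*} [NormedAddCommGroup X] [NormedSpace ℝ X]
    {K : Set (X →L[ℝ] ℝ)} (hK : IsCompact K) (k : ℕ → X →L[ℝ] ℝ) (hk : ∀ n, k n ∈ K)
    (h : ℕ → X) {C : ℝ} (hC : ∀ n, ‖h n‖ ≤ C)
    (hw : ∀ φ : X →L[ℝ] ℝ, Tendsto (fun n => φ (h n)) atTop (𝓝 0)) :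
    Tendsto (fun n => k n (h n)) atTop (𝓝 0) := by
  refine tendsto_of_subseq_tendsto fun ns hns => ?_
  obtain ⟨φ, -, ms, hms, hlim⟩ := hK.tendsto_subseq (fun n => hk (ns n))
  refine ⟨ms, ?_⟩
  have h1 : Tendsto (fun n => φ (h (ns (ms n)))) atTop (𝓝 0) :=
    (hw φ).comp (hns.comp hms.tendsto_atTop)
  have h2 : Tendsto (fun n => (k (ns (ms n)) - φ) (h (ns (ms n)))) atTop (𝓝 0) := by
    have h3 : Tendsto (fun n => ‖k (ns (ms n)) - φ‖ * C) atTop (𝓝 0) := by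
      simpa using (tendsto_iff_norm_sub_tendsto_zero.1 hlim).mul_const C
    refine squeeze_zero_norm (fun n => ?_) h3
    exact (ContinuousLinearMap.le_opNorm _ _).trans
      (mul_le_mul_of_nonneg_left (hC _) (norm_nonneg _))
  simpa using h2.add h1

theorem tendsto_zero_of_weak_of_compact {Z : Type*} [NormedAddCommGroup Z] [NormedSpace ℝ Z]
    {K : Set Z} (hK : IsCompact K) (u : ℕ → Z) (hu : ∀ n, u n ∈ K)
    (hw : ∀ φ : Z →L[ℝ] ℝ, Tendsto (fun n => φ (u n)) atTop (𝓝 0)) :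
    Tendsto u atTop (𝓝 0) := by
  refine tendsto_of_subseq_tendsto fun ns hns => ?_
  obtain ⟨z, -, ms, hms, hlim⟩ := hK.tendsto_subseq (fun n => hu (ns n))
  refine ⟨ms, ?_⟩
  have : z = 0 := by
    refine (NormedSpace.eq_zero_iff_forall_dual_eq_zero ℝ z).2 fun φ => ?_
    exact tendsto_nhds_unique ((φ.continuous.tendsto z).comp hlim)
      ((hw φ).comp (hns.comp hms.tendsto_atTop))
  rw [← this]
  exact hlim

theorem WeaklyConvergesTo.sub_const {X : Type*} [NormedAddCommGroup X] [NormedSpace ℝ X]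
    {x : ℕ → X} {x₀ : X} (h : WeaklyConvergesTo (𝕜 := ℝ) x x₀) :
    WeaklyConvergesTo (𝕜 := ℝ) (fun n => x n - x₀) 0 := by
  intro φ
  simpa using (h φ).sub_const (φ x₀)

theorem inv_smul_mem_unit_ball {X : Type*} [NormedAddCommGroup X] [NormedSpace ℝ X]
    {C : ℝ} (hC : 0 < C) {x : X} (hx : ‖x‖ ≤ C) : C⁻¹ • x ∈ closedBall (0 : X) 1 := by
  rw [mem_closedBall_zero_iff, norm_smul, norm_inv, Real.norm_of_nonneg hC.le,
    inv_mul_le_iff₀ hC]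
  simpa using hx

/-- If `T : X × Y → Z` is a continuous bilinear operator on Banach spaces such that both `T`
and its first transpose `T^{*1} : Z^* × Y → X^*` are compact, then `T` maps pairs of weakly
convergent sequences to strongly convergent sequences. -/
theorem strong_convergence_of_compact_and_transpose_compact
    {X Y Z : Type*} [NormedAddCommGroup X] [NormedSpace ℝ X] [CompleteSpace X]
    [NormedAddCommGroup Y] [NormedSpace ℝ Y] [CompleteSpace Y]
    [NormedAddCommGroup Z] [NormedSpace ℝ Z] [CompleteSpace Z]
    (T : X →L[ℝ] Y →L[ℝ] Z)
    (hT : IsCompactBilinearMap fun x y => T x y)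
    (hT1 : IsCompactBilinearMap fun (g : Z →L[ℝ] ℝ) (y : Y) => g.comp (T.flip y))
    (f : ℕ → X) (g : ℕ → Y) (f₀ : X) (g₀ : Y)
    (hf : WeaklyConvergesTo (𝕜 := ℝ) f f₀) (hg : WeaklyConvergesTo (𝕜 := ℝ) g g₀) :
    Tendsto (fun n => T (f n) (g n)) atTop (𝓝 (T f₀ g₀)) := by
  obtain ⟨C, hC, hCf⟩ := hf.sub_const.exists_bound
  obtain ⟨D, hD, hDg⟩ := hg.exists_bound
  obtain ⟨E, hE, hEg⟩ := hg.sub_const.exists_bound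
  have hA : Tendsto (fun n => T (f n - f₀) (g n)) atTop (𝓝 0) := by
    have hz : ∀ n, ∃ z : Z →L[ℝ] ℝ, ‖z‖ ≤ 1 ∧
        z (T (f n - f₀) (g n)) = ‖T (f n - f₀) (g n)‖ := fun n => by
      simpa using exists_dual_vector'' ℝ (T (f n - f₀) (g n))
    choose z hz1 hz2 using hz
    have key := tendsto_compact_pairing hT1 (fun n => (z n).comp (T.flip (D⁻¹ • g n)))
      (fun n => subset_closure ⟨z n, by simpa using hz1 n, D⁻¹ • g n,
        inv_smul_mem_unit_ball hD (hDg n), rfl⟩) (fun n => f n - f₀) hCf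
      (fun φ => by simpa only [map_zero] using hf.sub_const φ)
    rw [tendsto_zero_iff_norm_tendsto_zero]
    have key2 := key.const_mul D
    rw [mul_zero] at key2
    refine key2.congr fun n => ?_
    rw [← hz2 n, ContinuousLinearMap.comp_apply, ContinuousLinearMap.flip_apply, map_smul,
      map_smul, smul_eq_mul, mul_inv_cancel_left₀ hD.ne']
  have hB : Tendsto (fun n => T f₀ (g n - g₀)) atTop (𝓝 0) := by
    have hF : 0 < ‖f₀‖ + 1 := by positivity
    have key := tendsto_zero_of_weak_of_compact hT
      (fun n => T ((‖f₀‖ + 1)⁻¹ • f₀) (E⁻¹ • (g n - g₀)))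
      (fun n => subset_closure ⟨_, inv_smul_mem_unit_ball hF (by linarith), _,
        inv_smul_mem_unit_ball hE (hEg n), rfl⟩)
      (fun φ => by
        have := (hg.sub_const (φ.comp (T ((‖f₀‖ + 1)⁻¹ • f₀)))).const_mul E⁻¹
        rw [map_zero, mul_zero] at this
        refine this.congr fun n => ?_
        rw [ContinuousLinearMap.comp_apply, map_smul _ E⁻¹, map_smul _ E⁻¹, smul_eq_mul])
    have key2 := (key.const_smul E).const_smul (‖f₀‖ + 1)
    rw [smul_zero, smul_zero] at key2
    refine key2.congr fun n => ?_
    rw [map_smul _ E⁻¹, smul_inv_smul₀ hE.ne', map_smul, ContinuousLinearMap.smul_apply,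
      smul_inv_smul₀ hF.ne']
  have := (hA.add hB).add_const (T f₀ g₀)
  rw [add_zero, zero_add] at this
  refine this.congr fun n => ?_
  simp only [map_sub, ContinuousLinearMap.sub_apply]
  abel
end

section
/- There exist Banach spaces X, Y, Z and a compact continuous bilinear operator T : X × Y → Z such that neither the transpose T^{*1} : Z^* × Y → X^* nor the transpose T^{*2} : X × Z^* → Y^* is a compact bilinear operator. -/
open Filter Topology Metric

abbrev ExH : Type := lp (fun _ : ℕ => ℝ) 2

lemma exH_not_finite : ¬ FiniteDimensional ℝ ExH := by
  intro h
  let b : HilbertBasis ℕ ℝ ExH := HilbertBasis.ofRepr (LinearIsometryEquiv.refl ℝ ExH)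
  have := b.orthonormal.linearIndependent
  have := this.finite
  exact not_finite ℕ

lemma exH_not_compact (S : Set (ExH →L[ℝ] ℝ)) (hS : closedBall (0 : ExH →L[ℝ] ℝ) 1 ⊆ S) :
    ¬ IsCompact (closure S) := by
  intro h
  have hc : IsCompact (closedBall (0 : ExH →L[ℝ] ℝ) 1) :=
    h.of_isClosed_subset isClosed_closedBall (hS.trans subset_closure)
  have hf : FiniteDimensional ℝ (ExH →L[ℝ] ℝ) :=
    FiniteDimensional.of_isCompact_closedBall ℝ one_pos hc
  exact exH_not_finite (LinearEquiv.finiteDimensional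
    (InnerProductSpace.toDual ℝ ExH).symm.toLinearEquiv)

lemma exH_id_mem : ContinuousLinearMap.id ℝ ℝ ∈ closedBall (0 : ℝ →L[ℝ] ℝ) 1 := by
  simp

lemma exH_rep (f : ExH →L[ℝ] ℝ) (hf : f ∈ closedBall (0 : ExH →L[ℝ] ℝ) 1) :
    ∃ x ∈ closedBall (0 : ExH) 1, ∀ y, inner ℝ x y = f y := by
  refine ⟨(InnerProductSpace.toDual ℝ ExH).symm f, ?_, fun y => ?_⟩
  · rw [mem_closedBall_zero_iff] at hf ⊢
    rwa [LinearIsometryEquiv.norm_map]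
  · exact InnerProductSpace.toDual_symm_apply

/-- Proposition 2.5 (i): there exist Banach spaces `X`, `Y`, `Z` and a compact continuous
bilinear operator `T : X × Y → Z` such that neither of its transposes
`T^{*1} : Z^* × Y → X^*` and `T^{*2} : X × Z^* → Y^*` is a compact bilinear operator. -/
theorem exists_compact_bilinear_with_noncompact_transposes :
    ∃ (X Y Z : Type) (_ : NormedAddCommGroup X) (_ : NormedSpace ℝ X) (_ : CompleteSpace X)
      (_ : NormedAddCommGroup Y) (_ : NormedSpace ℝ Y) (_ : CompleteSpace Y)
      (_ : NormedAddCommGroup Z) (_ : NormedSpace ℝ Z) (_ : CompleteSpace Z)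
      (T : X →L[ℝ] Y →L[ℝ] Z),
      IsCompact (closure (Set.image2 (fun x y => T x y)
        (closedBall (0 : X) 1) (closedBall (0 : Y) 1))) ∧
      ¬ IsCompact (closure (Set.image2 (fun (g : Z →L[ℝ] ℝ) (y : Y) => g.comp (T.flip y))
        (closedBall (0 : Z →L[ℝ] ℝ) 1) (closedBall (0 : Y) 1))) ∧
      ¬ IsCompact (closure (Set.image2 (fun (x : X) (g : Z →L[ℝ] ℝ) => g.comp (T x))
        (closedBall (0 : X) 1) (closedBall (0 : Z →L[ℝ] ℝ) 1))) := by
  refine ⟨ExH, ExH, ℝ, inferInstance, inferInstance, inferInstance, inferInstance, inferInstance,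
    inferInstance, inferInstance, inferInstance, inferInstance, innerSL ℝ, ?_, ?_, ?_⟩
  · refine (isCompact_closedBall (0 : ℝ) 1).of_isClosed_subset isClosed_closure
      (closure_minimal ?_ isClosed_closedBall)
    rintro _ ⟨x, hx, y, hy, rfl⟩
    rw [mem_closedBall_zero_iff] at hx hy ⊢
    exact (norm_inner_le_norm x y).trans (mul_le_one₀ hx (norm_nonneg _) hy)
  · apply exH_not_compact
    intro f hf
    obtain ⟨x, hx, h⟩ := exH_rep f hf
    refine ⟨_, exH_id_mem, x, hx, ?_⟩
    ext y
    exact (real_inner_comm _ _).trans (h y)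
  · apply exH_not_compact
    intro f hf
    obtain ⟨x, hx, h⟩ := exH_rep f hf
    refine ⟨x, hx, _, exH_id_mem, ?_⟩
    ext y
    exact h y
end

section
/- There exist reflexive Banach spaces X and Y, a normed vector space Z, a compact continuous bilinear operator T : X × Y → Z, and sequences {x_n} ⊂ X converging weakly to 0 and {y_n} ⊂ Y converging weakly to 0 such that the sequence {T(x_n, y_n)} does not converge strongly in Z. -/
open Filter Topology Metric NormedSpace

theorem hilbert_reflexive_aux (E : Type) [NormedAddCommGroup E] [InnerProductSpace ℝ E]
    [CompleteSpace E] : Function.Surjective (inclusionInDoubleDual ℝ E) := by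
  intro φ
  let L : E →L[ℝ] (E →L[ℝ] ℝ) := innerSL ℝ
  let ψ : E →L[ℝ] ℝ := ContinuousLinearMap.comp φ L
  refine ⟨(InnerProductSpace.toDual ℝ E).symm ψ, ?_⟩
  ext f
  obtain ⟨w, rfl⟩ := (InnerProductSpace.toDual ℝ E).surjective f
  rw [dual_def, InnerProductSpace.toDual_apply_apply, real_inner_comm,
    InnerProductSpace.toDual_symm_apply]
  rfl

theorem lp_coord_tendsto_aux (w : lp (fun _ : ℕ => ℝ) 2) :
    Tendsto (fun n => w n) atTop (𝓝 0) := by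
  have h := (lp.memℓp w).summable (by norm_num)
  have h2 : Tendsto (fun n => (w n) ^ 2) atTop (𝓝 0) := by
    simpa using h.tendsto_atTop_zero
  have h3 := h2.sqrt
  simp only [Real.sqrt_sq_eq_abs, Real.sqrt_zero] at h3
  exact (tendsto_zero_iff_abs_tendsto_zero _).2 h3

theorem lp_weak_aux (f : lp (fun _ : ℕ => ℝ) 2 →L[ℝ] ℝ) :
    Tendsto (fun n => f (lp.single 2 n (1 : ℝ))) atTop (𝓝 0) := by
  obtain ⟨w, rfl⟩ := (InnerProductSpace.toDual ℝ _).surjective f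
  simpa [InnerProductSpace.toDual_apply_apply, lp.inner_single_right] using lp_coord_tendsto_aux w

/-- Proposition 2.3 (ii): there exist reflexive Banach spaces `X`, `Y`, a normed space `Z`,
a compact continuous bilinear operator `T : X × Y → Z`, and sequences `{x_n}`, `{y_n}`
converging weakly to `0` such that `{T(x_n, y_n)}` does not converge strongly in `Z`. -/
theorem exists_compact_bilinear_not_mapping_weak_null_to_strong_convergent :
    ∃ (X Y Z : Type) (_ : NormedAddCommGroup X) (_ : NormedSpace ℝ X) (_ : CompleteSpace X)
      (_ : NormedAddCommGroup Y) (_ : NormedSpace ℝ Y) (_ : CompleteSpace Y)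
      (_ : NormedAddCommGroup Z) (_ : NormedSpace ℝ Z)
      (T : X →L[ℝ] Y →L[ℝ] Z) (x : ℕ → X) (y : ℕ → Y),
      Function.Surjective (inclusionInDoubleDual ℝ X) ∧
      Function.Surjective (inclusionInDoubleDual ℝ Y) ∧
      IsCompact (closure (Set.image2 (fun x y => T x y)
        (closedBall (0 : X) 1) (closedBall (0 : Y) 1))) ∧
      (∀ f : X →L[ℝ] ℝ, Tendsto (fun n => f (x n)) atTop (𝓝 0)) ∧
      (∀ g : Y →L[ℝ] ℝ, Tendsto (fun n => g (y n)) atTop (𝓝 0)) ∧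
      ¬ ∃ z : Z, Tendsto (fun n => T (x n) (y n)) atTop (𝓝 z) := by
  refine ⟨lp (fun _ : ℕ => ℝ) 2, lp (fun _ : ℕ => ℝ) 2, ℝ, inferInstance, inferInstance,
    inferInstance, inferInstance, inferInstance, inferInstance, inferInstance, inferInstance,
    innerSL ℝ, fun n => lp.single 2 n (1 : ℝ), fun n => (-1 : ℝ) ^ n • lp.single 2 n (1 : ℝ),
    hilbert_reflexive_aux _, hilbert_reflexive_aux _, ?_, lp_weak_aux, ?_, ?_⟩
  · refine (isCompact_closedBall (0 : ℝ) 1).of_isClosed_subset isClosed_closure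
      (closure_minimal ?_ isClosed_closedBall)
    rintro _ ⟨x, hx, y, hy, rfl⟩
    rw [mem_closedBall_zero_iff] at hx hy ⊢
    exact (norm_inner_le_norm (𝕜 := ℝ) x y).trans
      (mul_le_one₀ hx (norm_nonneg _) hy)
  · intro g
    rw [tendsto_zero_iff_abs_tendsto_zero]
    have := (tendsto_zero_iff_abs_tendsto_zero _).1 (lp_weak_aux g)
    refine this.congr fun n => ?_
    simp [abs_mul]
  · rintro ⟨z, hz⟩
    have h : Tendsto (fun n : ℕ => (-1 : ℝ) ^ n) atTop (𝓝 z) := by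
      refine hz.congr fun n => ?_
      rw [innerSL_apply_apply, inner_smul_right, lp.inner_single_left]
      simp
    have h1 := (tendsto_add_atTop_iff_nat 1).2 h
    have h2 : Tendsto (fun n : ℕ => (-1 : ℝ) ^ n) atTop (𝓝 (-z)) := by
      refine h1.neg.congr fun n => ?_
      rw [pow_succ]; ring
    have h3 : z = 0 := by linarith [tendsto_nhds_unique h h2]
    subst h3
    have h4 := h.abs
    simp only [abs_pow, abs_neg, abs_one, one_pow, abs_zero] at h4
    exact one_ne_zero (tendsto_nhds_unique tendsto_const_nhds h4)
end
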